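/- No deterministic online algorithm for the data-center right-sizing problem with d heterogeneous server types and time- and load-independent operating costs achieves a competitive ratio smaller than 2d. -/

import Mathlib

open Finset

/-- A schedule `x` (where `x t j` is the number of active servers of type `j` at time `t`)
is feasible for horizon `T`, `d` server types with `m j` servers of type `j`, and job
volumes `lam`: all servers are off at time `0` and after time `T`, the demand is met,
and no more servers are used than available. -/
def Feasible (T d : ℕ) (m lam : ℕ → ℕ) (x : ℕ → ℕ → ℕ) : Prop :=
  (∀ j, x 0 j = 0) ∧
  (∀ t, T < t → ∀ j, x t j = 0) ∧
  (∀ t ∈ Finset.Icc 1 T, lam t ≤ ∑ j ∈ Finset.Icc 1 d, x t j ∧ ∀ j, x t j ≤ m j)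

/-- Total cost of a schedule: operating costs plus switching costs for powering up. -/
noncomputable def cost (T d : ℕ) (β l : ℕ → ℝ) (x : ℕ → ℕ → ℕ) : ℝ :=
  ∑ t ∈ Finset.Icc 1 T, ∑ j ∈ Finset.Icc 1 d,
    (l j * (x t j : ℝ) + β j * ((x t j - x (t - 1) j : ℕ) : ℝ))

/-- An optimal schedule: feasible and of minimum cost among feasible schedules. -/
def Optimal (T d : ℕ) (m lam : ℕ → ℕ) (β l : ℕ → ℝ) (x : ℕ → ℕ → ℕ) : Prop :=
  Feasible T d m lam x ∧
  ∀ x', Feasible T d m lam x' → cost T d β l x ≤ cost T d β l x'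

/-- The lane representation: `lane d x t k` is the server type serving lane `k`
at time `t` (largest `j ∈ [1,d]` with `∑_{j'=j}^{d} x t j' ≥ k`, else `0`). -/
noncomputable def lane (d : ℕ) (x : ℕ → ℕ → ℕ) (t k : ℕ) : ℕ :=
  sSup {j | j ∈ Finset.Icc 1 d ∧ k ≤ ∑ j' ∈ Finset.Icc j d, x t j'}

/-- The schedule produced by an online algorithm `A`: at each time slot `t ∈ [1,T]`,
the number of active servers of each type is determined only by the job volumes
`lam 1, …, lam t` seen so far. -/
def onlineSched (A : List ℕ → ℕ → ℕ) (T d : ℕ) (lam : ℕ → ℕ) (t j : ℕ) : ℕ :=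
  if 1 ≤ t ∧ t ≤ T ∧ 1 ≤ j ∧ j ≤ d then
    A ((List.range t).map (fun i => lam (i + 1))) j
  else 0

/-!
The adversary sends a job exactly when the algorithm was idle one slot before. It compares the
algorithm with `2d` offline schedules, two for each type `j`: a single server of type `j` that is
on whenever the largest type the algorithm had active one slot before is `< j`, respectively
`≤ j`. Each of them serves every job, since an idle algorithm has largest active type `0`. If
`β j = N ^ j` and `l j = N ^ (-j)` with `N` large, sums of costs over several types are dominated
by a single term:
* when the algorithm has largest active type `a`, its operating cost is at least `l a`, and the
  competitors that are on are one of type `a` and pairs of the cheaper-to-run types `j > a`, so they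
  jointly pay about `l a`;
* when its largest active type rises to `b`, it pays at least `β b`, and the competitors that
  may power down are one of type `b` and pairs of types `j < b`, so their joint switching cost is
  about `β b`.

Hence the `2d` competitors together cost barely more than the algorithm alone, up to an additive
constant. As one competitor never pauses, their joint cost grows without bound with the horizon,
so the constant does not matter.
-/

section Lane

variable {d n t k j : ℕ} {x : ℕ → ℕ → ℕ}

lemma lane_le_iff (hk : 0 < k) : lane d x t k ≤ n ↔ ∑ j ∈ Ioc n d, x t j < k := by
  have hbdd : BddAbove {j | j ∈ Icc 1 d ∧ k ≤ ∑ j' ∈ Icc j d, x t j'} :=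
    ⟨d, fun j hj => (mem_Icc.1 hj.1).2⟩
  rw [lane, csSup_le_iff' hbdd]
  constructor
  · intro hle
    by_contra! hsum
    have hnd : n < d := by
      by_contra! hdn
      rw [Ioc_eq_empty_of_le hdn, sum_empty] at hsum
      omega
    rw [← Icc_add_one_left_eq_Ioc] at hsum
    have := hle (n + 1) ⟨mem_Icc.2 ⟨by omega, hnd⟩, hsum⟩
    omega
  · rintro hsum j ⟨-, hj⟩
    by_contra! hnj
    have hsub : Icc j d ⊆ Ioc n d := fun i hi => by rw [mem_Icc] at hi; rw [mem_Ioc]; omega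
    have := sum_le_sum_of_subset (f := x t) hsub
    omega

lemma lane_one_le_iff : lane d x t 1 ≤ n ↔ ∀ j ∈ Ioc n d, x t j = 0 := by
  rw [lane_le_iff one_pos, Nat.lt_one_iff, sum_eq_zero_iff]

lemma lane_one_le : lane d x t 1 ≤ d := lane_one_le_iff.2 (by simp)

lemma lane_one_eq_zero_iff : lane d x t 1 = 0 ↔ ∀ j ∈ Icc 1 d, x t j = 0 := by
  rw [← Nat.le_zero, lane_one_le_iff, ← Icc_add_one_left_eq_Ioc, zero_add]

lemma eq_zero_of_lane_one_lt (hlt : lane d x t 1 < j) (hj : j ≤ d) : x t j = 0 :=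
  lane_one_le_iff.1 le_rfl j (mem_Ioc.2 ⟨hlt, hj⟩)

lemma lane_one_active (hpos : lane d x t 1 ≠ 0) : 0 < x t (lane d x t 1) := by
  by_contra! hoff
  have hle : lane d x t 1 ≤ lane d x t 1 - 1 := lane_one_le_iff.2 fun j hj => by
    rw [mem_Ioc] at hj
    rcases (show lane d x t 1 ≤ j by omega).eq_or_lt with rfl | hlt
    · omega
    · exact eq_zero_of_lane_one_lt hlt hj.2
  omega

end Lane

section Cost

variable {T d : ℕ} {β l : ℕ → ℝ} {x : ℕ → ℕ → ℕ} {t : ℕ}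

/-- The cost of running the configuration `y` (with `y j` servers of type `j`) for one time slot. -/
noncomputable def operatingCost (d : ℕ) (l : ℕ → ℝ) (y : ℕ → ℕ) : ℝ :=
  ∑ j ∈ Icc 1 d, l j * y j

/-- The cost of passing from the configuration `y` to the configuration `z`; as in `cost`, the
truncated subtraction makes powering down free. -/
noncomputable def switchingCost (d : ℕ) (β : ℕ → ℝ) (y z : ℕ → ℕ) : ℝ :=
  ∑ j ∈ Icc 1 d, β j * ((z j - y j : ℕ) : ℝ)

lemma cost_eq_sum_range : cost T d β l x =
    ∑ t ∈ range T, (operatingCost d l (x (t + 1)) + switchingCost d β (x t) (x (t + 1))) := by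
  simp only [cost, operatingCost, switchingCost, sum_add_distrib]
  rw [range_eq_Ico, sum_Ico_add' (fun t => ∑ j ∈ Icc 1 d, l j * (x t j : ℝ)),
    ← Ico_add_one_right_eq_Icc,
    ← sum_Ico_add' (fun t => ∑ j ∈ Icc 1 d, β j * ((x t j - x (t - 1) j : ℕ) : ℝ)) 0 T 1]
  rfl

lemma operatingCost_nonneg (hl : ∀ j ∈ Icc 1 d, 0 ≤ l j) (y : ℕ → ℕ) :
    0 ≤ operatingCost d l y :=
  sum_nonneg fun j hj => mul_nonneg (hl j hj) (Nat.cast_nonneg _)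

lemma switchingCost_nonneg (hβ : ∀ j ∈ Icc 1 d, 0 ≤ β j) (y z : ℕ → ℕ) :
    0 ≤ switchingCost d β y z :=
  sum_nonneg fun j hj => mul_nonneg (hβ j hj) (Nat.cast_nonneg _)

lemma cost_nonneg (hβ : ∀ j ∈ Icc 1 d, 0 ≤ β j) (hl : ∀ j ∈ Icc 1 d, 0 ≤ l j)
    (x : ℕ → ℕ → ℕ) : 0 ≤ cost T d β l x := by
  rw [cost_eq_sum_range]
  exact sum_nonneg fun t _ => add_nonneg (operatingCost_nonneg hl _) (switchingCost_nonneg hβ _ _)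

lemma le_sum_mul_natCast {ι : Type*} {s : Finset ι} {w : ι → ℝ} {n : ι → ℕ} {i : ι}
    (hw : ∀ j ∈ s, 0 ≤ w j) (hi : i ∈ s) (hn : 0 < n i) : w i ≤ ∑ j ∈ s, w j * (n j : ℝ) :=
  calc w i ≤ w i * n i := le_mul_of_one_le_right (hw i hi) (by exact_mod_cast hn)
    _ ≤ ∑ j ∈ s, w j * (n j : ℝ) :=
      single_le_sum (f := fun j => w j * (n j : ℝ))
        (fun j hj => mul_nonneg (hw j hj) (Nat.cast_nonneg _)) hi

lemma le_operatingCost_of_lane_ne_zero (hl : ∀ j ∈ Icc 1 d, 0 ≤ l j) (hpos : lane d x t 1 ≠ 0) :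
    l (lane d x t 1) ≤ operatingCost d l (x t) :=
  le_sum_mul_natCast hl (mem_Icc.2 ⟨by omega, lane_one_le⟩) (lane_one_active hpos)

lemma le_switchingCost_of_lane_lt (hβ : ∀ j ∈ Icc 1 d, 0 ≤ β j)
    (hlt : lane d x t 1 < lane d x (t + 1) 1) :
    β (lane d x (t + 1) 1) ≤ switchingCost d β (x t) (x (t + 1)) := by
  refine le_sum_mul_natCast hβ (mem_Icc.2 ⟨by omega, lane_one_le⟩) ?_
  rw [eq_zero_of_lane_one_lt hlt lane_one_le, Nat.sub_zero]
  exact lane_one_active (by omega)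

end Cost

section SingleType

variable {T d j : ℕ} {β l : ℕ → ℝ} {q : ℕ → ℕ}

/-- The schedule that runs `q (t - 1)` servers of type `j` in each time slot `t ∈ [1, T]`, and no
other servers. The shift by one lets `q` depend on what another schedule does one slot earlier. -/
def singleTypeSchedule (T j : ℕ) (q : ℕ → ℕ) (t i : ℕ) : ℕ :=
  if i = j ∧ 1 ≤ t ∧ t ≤ T then q (t - 1) else 0

lemma singleTypeSchedule_zero (i : ℕ) : singleTypeSchedule T j q 0 i = 0 :=
  if_neg (by omega)

lemma singleTypeSchedule_of_ne {t i : ℕ} (hi : i ≠ j) : singleTypeSchedule T j q t i = 0 :=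
  if_neg (by tauto)

lemma singleTypeSchedule_succ {t : ℕ} (ht : t < T) : singleTypeSchedule T j q (t + 1) j = q t :=
  if_pos ⟨rfl, by omega, ht⟩

lemma feasible_singleTypeSchedule {m lam : ℕ → ℕ} (hj : j ∈ Icc 1 d)
    (hlam : ∀ t < T, lam (t + 1) ≤ q t) (hm : ∀ t, q t ≤ m j) :
    Feasible T d m lam (singleTypeSchedule T j q) := by
  refine ⟨singleTypeSchedule_zero, fun t ht i => if_neg (by omega), fun t ht => ?_⟩
  obtain ⟨t, rfl⟩ := Nat.exists_eq_add_of_le' (mem_Icc.1 ht).1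
  have htT : t < T := (mem_Icc.1 ht).2
  refine ⟨?_, fun i => ?_⟩
  · rw [sum_eq_single_of_mem j hj fun i _ hi => singleTypeSchedule_of_ne hi,
      singleTypeSchedule_succ htT]
    exact hlam t htT
  · rcases eq_or_ne i j with rfl | hi
    · rw [singleTypeSchedule_succ htT]
      exact hm t
    · rw [singleTypeSchedule_of_ne hi]
      exact Nat.zero_le _

lemma cost_singleTypeSchedule (hj : j ∈ Icc 1 d) : cost T d β l (singleTypeSchedule T j q) =
    l j * ∑ t ∈ range T, (q t : ℝ) + β j * ((∑ t ∈ range T,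
      (singleTypeSchedule T j q (t + 1) j - singleTypeSchedule T j q t j) : ℕ) : ℝ) := by
  rw [cost_eq_sum_range, sum_add_distrib, Nat.cast_sum, mul_sum, mul_sum]
  congr 1 <;> refine sum_congr rfl fun t ht => ?_
  · rw [operatingCost, sum_eq_single_of_mem j hj fun i _ hi => by
      rw [singleTypeSchedule_of_ne hi, Nat.cast_zero, mul_zero],
      singleTypeSchedule_succ (mem_range.1 ht)]
  · rw [switchingCost, sum_eq_single_of_mem j hj fun i _ hi => by
      rw [singleTypeSchedule_of_ne hi, Nat.zero_sub, Nat.cast_zero, mul_zero]]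

lemma le_cost_singleTypeSchedule (hj : j ∈ Icc 1 d) (hβ : 0 ≤ β j) :
    l j * ∑ t ∈ range T, (q t : ℝ) ≤ cost T d β l (singleTypeSchedule T j q) := by
  rw [cost_singleTypeSchedule hj]
  exact le_add_of_nonneg_right (mul_nonneg hβ (Nat.cast_nonneg _))

lemma sum_range_succ_tsub_add (q : ℕ → ℕ) (n : ℕ) :
    ∑ t ∈ range n, (q (t + 1) - q t) + q 0 = ∑ t ∈ range n, (q t - q (t + 1)) + q n := by
  induction n with
  | zero => simp
  | succ n ih => rw [sum_range_succ, sum_range_succ]; omega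

lemma powerUps_singleTypeSchedule_le {M : ℕ} (hq : ∀ t, q t ≤ M) :
    ∑ t ∈ range T, (singleTypeSchedule T j q (t + 1) j - singleTypeSchedule T j q t j) ≤
      ∑ t ∈ range T, (q t - q (t + 1)) + M := by
  cases T with
  | zero => simp
  | succ n =>
    calc ∑ t ∈ range (n + 1),
          (singleTypeSchedule (n + 1) j q (t + 1) j - singleTypeSchedule (n + 1) j q t j)
        = ∑ t ∈ range n, (q (t + 1) - q t) + q 0 := by
          rw [sum_range_succ', singleTypeSchedule_succ n.succ_pos, singleTypeSchedule_zero,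
            Nat.sub_zero]
          congr 1
          refine sum_congr rfl fun t ht => ?_
          have htn := mem_range.1 ht
          rw [singleTypeSchedule_succ (by omega), singleTypeSchedule_succ (by omega)]
      _ = ∑ t ∈ range n, (q t - q (t + 1)) + q n := sum_range_succ_tsub_add q n
      _ ≤ ∑ t ∈ range (n + 1), (q t - q (t + 1)) + M :=
          add_le_add (sum_le_sum_of_subset (range_mono n.le_succ)) (hq n)

-- Every server powered up is later powered down or still on at the end, so the number of
-- power-ups can be read off the power-downs.
lemma cost_singleTypeSchedule_le (hj : j ∈ Icc 1 d) (hβ : 0 ≤ β j) {M : ℕ}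
    (hq : ∀ t, q t ≤ M) : cost T d β l (singleTypeSchedule T j q) ≤
      ∑ t ∈ range T, (l j * q t + β j * ((q t - q (t + 1) : ℕ) : ℝ)) + β j * M := by
  have hup := powerUps_singleTypeSchedule_le (T := T) (j := j) hq
  rw [cost_singleTypeSchedule hj, sum_add_distrib, ← mul_sum, ← mul_sum, add_assoc, ← mul_add]
  gcongr
  exact_mod_cast hup

end SingleType

section SteepCosts

variable {d : ℕ} {ε N : ℝ} {β l : ℕ → ℝ}

/-- Switching costs `β` growing and operating costs `l` decaying so fast that the costs of all
cheaper types together are negligible, to relative precision `ε`, against those of a single type.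
The factor `2` counts the two schedules per type that compete with the online algorithm. -/
structure SteepCosts (d : ℕ) (ε : ℝ) (β l : ℕ → ℝ) : Prop where
  eps_nonneg : 0 ≤ ε
  β_nonneg : ∀ j ∈ Icc 1 d, 0 ≤ β j
  l_nonneg : ∀ j ∈ Icc 1 d, 0 ≤ l j
  two_mul_sum_β_le : ∀ k ∈ Icc 1 d, 2 * ∑ j ∈ Ico 1 k, β j ≤ ε * β k
  two_mul_sum_l_le : ∀ k ∈ Icc 1 d, 2 * ∑ j ∈ Ioc k d, l j ≤ ε * l k
  two_mul_sum_l_le_β : ∀ k ∈ Icc 1 d, 2 * ∑ j ∈ Ioc 0 d, l j ≤ ε * β k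

lemma sum_Ico_pow_le (hN : 1 < N) {m k : ℕ} (hmk : m ≤ k) :
    ∑ j ∈ Ico m k, N ^ j ≤ N ^ k / (N - 1) := by
  rw [geom_sum_Ico hN.ne' hmk]
  have : 0 ≤ N - 1 := by linarith
  have : 0 ≤ N ^ m := by positivity
  gcongr
  linarith

lemma sum_Ioc_inv_pow_le (hN : 1 < N) (k d : ℕ) :
    ∑ j ∈ Ioc k d, (N ^ j)⁻¹ ≤ (N ^ k)⁻¹ / (N - 1) := by
  have : 0 < N := by linarith
  have : N - 1 ≠ 0 := by linarith
  calc ∑ j ∈ Ioc k d, (N ^ j)⁻¹ = ∑ j ∈ Ico (k + 1) (d + 1), N⁻¹ ^ j := by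
        simp only [Ico_add_one_add_one_eq_Ioc, inv_pow]
    _ ≤ N⁻¹ ^ (k + 1) / (1 - N⁻¹) :=
        geom_sum_Ico_le_of_lt_one (by positivity) (inv_lt_one_of_one_lt₀ hN)
    _ = (N ^ k)⁻¹ / (N - 1) := by
        rw [inv_pow, pow_succ]
        field_simp

lemma steepCosts_pow (hN : 1 < N) (d : ℕ) :
    SteepCosts d (2 / (N - 1)) (fun j => N ^ j) (fun j => (N ^ j)⁻¹) := by
  have : 0 < N := by linarith
  have : 0 < N - 1 := by linarith
  refine ⟨by positivity, fun j _ => by positivity, fun j _ => by positivity, fun k hk => ?_,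
    fun k _ => ?_, fun k _ => ?_⟩
  · calc 2 * ∑ j ∈ Ico 1 k, N ^ j ≤ 2 * (N ^ k / (N - 1)) := by
          gcongr
          exact sum_Ico_pow_le hN (mem_Icc.1 hk).1
      _ = 2 / (N - 1) * N ^ k := by ring
  · calc 2 * ∑ j ∈ Ioc k d, (N ^ j)⁻¹ ≤ 2 * ((N ^ k)⁻¹ / (N - 1)) := by
          gcongr
          exact sum_Ioc_inv_pow_le hN k d
      _ = 2 / (N - 1) * (N ^ k)⁻¹ := by ring
  · calc 2 * ∑ j ∈ Ioc 0 d, (N ^ j)⁻¹ ≤ 2 * ((N ^ 0)⁻¹ / (N - 1)) := by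
          gcongr
          exact sum_Ioc_inv_pow_le hN 0 d
      _ = 2 / (N - 1) * 1 := by rw [pow_zero, inv_one]; ring
      _ ≤ 2 / (N - 1) * N ^ k := by
          gcongr
          exact one_le_pow₀ hN.le

open Filter Topology in
lemma exists_one_lt_mul_lt {b c : ℝ} (hc : c < b) :
    ∃ N : ℝ, 1 < N ∧ (1 + 2 * (2 / (N - 1))) * c < b := by
  have hlim : Tendsto (fun N : ℝ => (1 + 2 * (2 / (N - 1))) * c) atTop
      (𝓝 ((1 + 2 * 0) * c)) :=
    (((tendsto_const_nhds.div_atTop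
      (tendsto_atTop_add_const_right _ (-1) tendsto_id)).const_mul 2).const_add 1).mul_const c
  exact ((eventually_gt_atTop 1).and (hlim.eventually_lt_const (by linarith))).exists

end SteepCosts

section Competitors

variable {d a b : ℕ} {β : ℕ → ℝ}

/-- The indicator of `a < k`: whether a competitor with threshold `k` runs its server when `a` is
the largest type that the online algorithm has active. -/
def belowThreshold (k a : ℕ) : ℕ := if a < k then 1 else 0

lemma belowThreshold_le_one (k a : ℕ) : belowThreshold k a ≤ 1 := by
  rw [belowThreshold]
  split_ifs <;> omega

lemma belowThreshold_tsub_le (k a b : ℕ) :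
    belowThreshold k a - belowThreshold k b ≤ if k ≤ b then 1 else 0 := by
  unfold belowThreshold
  split_ifs <;> omega

lemma belowThreshold_tsub_eq_zero (k : ℕ) (hba : b ≤ a) :
    belowThreshold k a - belowThreshold k b = 0 := by
  unfold belowThreshold
  split_ifs <;> omega

/-- The competitor running a single server of type `j` exactly in those time slots `t ∈ [1, T]`
for which `x` had no server of type `k` or larger active at time `t - 1`. -/
noncomputable def competitor (T d : ℕ) (x : ℕ → ℕ → ℕ) (k j : ℕ) : ℕ → ℕ → ℕ :=
  singleTypeSchedule T j fun t => belowThreshold k (lane d x t 1)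

/-- The joint operating cost, per time slot, of the `2d` competitors (type `j` with threshold `j`
or `j + 1`) when `a` is the largest type that the online algorithm has active. -/
noncomputable def competitorsOperatingCost (d : ℕ) (l : ℕ → ℝ) (a : ℕ) : ℝ :=
  ∑ j ∈ Icc 1 d, ∑ i ∈ range 2, l j * belowThreshold (j + i) a

/-- The joint switching cost `β` of those of the `2d` competitors that power down when the largest
active type of the online algorithm changes from `a` to `b`. -/
noncomputable def competitorsSwitchingCost (d : ℕ) (β : ℕ → ℝ) (a b : ℕ) : ℝ :=
  ∑ j ∈ Icc 1 d, ∑ i ∈ range 2,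
    β j * ((belowThreshold (j + i) a - belowThreshold (j + i) b : ℕ) : ℝ)

lemma sum_mul_belowThreshold (l : ℕ → ℝ) (d k a : ℕ) :
    ∑ j ∈ Icc 1 d, l j * belowThreshold (j + k) a = ∑ j ∈ Icc 1 d with a < j + k, l j := by
  simp only [belowThreshold, Nat.cast_ite, Nat.cast_one, Nat.cast_zero, mul_ite, mul_one, mul_zero,
    sum_filter]

lemma competitorsOperatingCost_zero (d : ℕ) (l : ℕ → ℝ) :
    competitorsOperatingCost d l 0 = 2 * ∑ j ∈ Ioc 0 d, l j := by
  have hall (k : ℕ) : {j ∈ Icc 1 d | 0 < j + k} = Ioc 0 d := by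
    ext j; simp only [mem_filter, mem_Icc, mem_Ioc]; omega
  simp only [competitorsOperatingCost, sum_comm (s := Icc 1 d), sum_mul_belowThreshold, hall,
    sum_const, card_range, nsmul_eq_mul, Nat.cast_ofNat]

lemma competitorsOperatingCost_of_mem (ha : a ∈ Icc 1 d) (l : ℕ → ℝ) :
    competitorsOperatingCost d l a = l a + 2 * ∑ j ∈ Ioc a d, l j := by
  rw [mem_Icc] at ha
  have hlt : {j ∈ Icc 1 d | a < j + 0} = Ioc a d := by
    ext j; simp only [mem_filter, mem_Icc, mem_Ioc]; omega
  have hle : {j ∈ Icc 1 d | a < j + 1} = Icc a d := by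
    ext j; simp only [mem_filter, mem_Icc]; omega
  rw [competitorsOperatingCost, sum_comm, sum_range_succ, sum_range_one, sum_mul_belowThreshold,
    sum_mul_belowThreshold, hlt, hle, ← add_sum_Ioc_eq_sum_Icc ha.2]
  ring

lemma competitorsSwitchingCost_of_le (β : ℕ → ℝ) (hba : b ≤ a) :
    competitorsSwitchingCost d β a b = 0 :=
  sum_eq_zero fun j _ => sum_eq_zero fun i _ => by
    rw [belowThreshold_tsub_eq_zero _ hba, Nat.cast_zero, mul_zero]

lemma sum_mul_belowThreshold_tsub_le (hβ : ∀ j ∈ Icc 1 d, 0 ≤ β j) (k : ℕ) :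
    ∑ j ∈ Icc 1 d, β j * ((belowThreshold (j + k) a - belowThreshold (j + k) b : ℕ) : ℝ) ≤
      ∑ j ∈ Icc 1 d with j + k ≤ b, β j := by
  rw [sum_filter]
  refine sum_le_sum fun j hj => ?_
  calc β j * ((belowThreshold (j + k) a - belowThreshold (j + k) b : ℕ) : ℝ)
      ≤ β j * ((if j + k ≤ b then 1 else 0 : ℕ) : ℝ) :=
        mul_le_mul_of_nonneg_left (by exact_mod_cast belowThreshold_tsub_le _ a b) (hβ j hj)
    _ = if j + k ≤ b then β j else 0 := by split_ifs <;> simp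

lemma competitorsSwitchingCost_le_of_mem (hβ : ∀ j ∈ Icc 1 d, 0 ≤ β j) (hb : b ∈ Icc 1 d) :
    competitorsSwitchingCost d β a b ≤ β b + 2 * ∑ j ∈ Ico 1 b, β j := by
  rw [mem_Icc] at hb
  have hle : {j ∈ Icc 1 d | j + 0 ≤ b} = Icc 1 b := by
    ext j; simp only [mem_filter, mem_Icc]; omega
  have hlt : {j ∈ Icc 1 d | j + 1 ≤ b} = Ico 1 b := by
    ext j; simp only [mem_filter, mem_Icc, mem_Ico]; omega
  have hsum_le := sum_mul_belowThreshold_tsub_le (a := a) (b := b) hβ 0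
  have hsum_lt := sum_mul_belowThreshold_tsub_le (a := a) (b := b) hβ 1
  rw [hle, ← sum_Ico_add_eq_sum_Icc hb.1] at hsum_le
  rw [hlt] at hsum_lt
  rw [competitorsSwitchingCost, sum_comm, sum_range_succ, sum_range_one]
  linarith

end Competitors

section Charging

variable {T d t : ℕ} {ε : ℝ} {β l : ℕ → ℝ} {x : ℕ → ℕ → ℕ}

-- While the online algorithm is idle it pays no operating cost, so the competitors are charged to
-- the power-up that must follow.
lemma competitorsOperatingCost_le (h : SteepCosts d ε β l)
    (hidle : lane d x t 1 = 0 → lane d x (t + 1) 1 ≠ 0) :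
    competitorsOperatingCost d l (lane d x t 1) ≤
      (1 + ε) * operatingCost d l (x t) + ε * switchingCost d β (x t) (x (t + 1)) := by
  have hε := h.eps_nonneg
  have hop := operatingCost_nonneg h.l_nonneg (x t)
  have hsw := switchingCost_nonneg h.β_nonneg (x t) (x (t + 1))
  rcases eq_or_ne (lane d x t 1) 0 with hzero | hpos
  · have hnext := hidle hzero
    have hup : β (lane d x (t + 1) 1) ≤ switchingCost d β (x t) (x (t + 1)) :=
      le_switchingCost_of_lane_lt h.β_nonneg (by omega)
    calc competitorsOperatingCost d l (lane d x t 1) = 2 * ∑ j ∈ Ioc 0 d, l j := by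
          rw [hzero, competitorsOperatingCost_zero]
      _ ≤ ε * β (lane d x (t + 1) 1) :=
          h.two_mul_sum_l_le_β _ (mem_Icc.2 ⟨by omega, lane_one_le⟩)
      _ ≤ ε * switchingCost d β (x t) (x (t + 1)) := by gcongr
      _ ≤ _ := le_add_of_nonneg_left (by positivity)
  · have hmem : lane d x t 1 ∈ Icc 1 d := mem_Icc.2 ⟨by omega, lane_one_le⟩
    calc competitorsOperatingCost d l (lane d x t 1)
        = l (lane d x t 1) + 2 * ∑ j ∈ Ioc (lane d x t 1) d, l j :=
          competitorsOperatingCost_of_mem hmem l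
      _ ≤ (1 + ε) * l (lane d x t 1) := by linarith [h.two_mul_sum_l_le _ hmem]
      _ ≤ (1 + ε) * operatingCost d l (x t) := by
          gcongr
          exact le_operatingCost_of_lane_ne_zero h.l_nonneg hpos
      _ ≤ _ := le_add_of_nonneg_right (by positivity)

lemma competitorsSwitchingCost_le (h : SteepCosts d ε β l) :
    competitorsSwitchingCost d β (lane d x t 1) (lane d x (t + 1) 1) ≤
      (1 + ε) * switchingCost d β (x t) (x (t + 1)) := by
  have hε := h.eps_nonneg
  rcases le_or_gt (lane d x (t + 1) 1) (lane d x t 1) with hle | hlt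
  · have hsw := switchingCost_nonneg h.β_nonneg (x t) (x (t + 1))
    rw [competitorsSwitchingCost_of_le β hle]
    positivity
  · have hmem : lane d x (t + 1) 1 ∈ Icc 1 d := mem_Icc.2 ⟨by omega, lane_one_le⟩
    calc competitorsSwitchingCost d β (lane d x t 1) (lane d x (t + 1) 1)
        ≤ β (lane d x (t + 1) 1) + 2 * ∑ j ∈ Ico 1 (lane d x (t + 1) 1), β j :=
          competitorsSwitchingCost_le_of_mem h.β_nonneg hmem
      _ ≤ (1 + ε) * β (lane d x (t + 1) 1) := by linarith [h.two_mul_sum_β_le _ hmem]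
      _ ≤ (1 + ε) * switchingCost d β (x t) (x (t + 1)) := by
          gcongr
          exact le_switchingCost_of_lane_lt h.β_nonneg hlt

lemma sum_operatingCost_le (hl : ∀ j ∈ Icc 1 d, 0 ≤ l j) (hx : ∀ j, x 0 j = 0) :
    ∑ t ∈ range T, operatingCost d l (x t) ≤ ∑ t ∈ range T, operatingCost d l (x (t + 1)) := by
  have hstart : operatingCost d l (x 0) = 0 := by simp [operatingCost, hx]
  have hend := operatingCost_nonneg hl (x T)
  have hshift := sum_range_succ' (fun t => operatingCost d l (x t)) T
  rw [sum_range_succ] at hshift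
  linarith

lemma sum_cost_competitor_le_sum_range (hβ : ∀ j ∈ Icc 1 d, 0 ≤ β j) :
    ∑ j ∈ Icc 1 d, ∑ i ∈ range 2, cost T d β l (competitor T d x (j + i) j) ≤
      ∑ t ∈ range T, (competitorsOperatingCost d l (lane d x t 1) +
        competitorsSwitchingCost d β (lane d x t 1) (lane d x (t + 1) 1)) +
      2 * ∑ j ∈ Icc 1 d, β j := by
  have hcost : ∀ j ∈ Icc 1 d, ∀ i ∈ range 2, cost T d β l (competitor T d x (j + i) j) ≤
      ∑ t ∈ range T, (l j * belowThreshold (j + i) (lane d x t 1) +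
        β j * ((belowThreshold (j + i) (lane d x t 1) -
          belowThreshold (j + i) (lane d x (t + 1) 1) : ℕ) : ℝ)) + β j := fun j hj i _ => by
    simpa [competitor] using cost_singleTypeSchedule_le (T := T) (l := l) hj (hβ j hj)
      fun t => belowThreshold_le_one (j + i) (lane d x t 1)
  refine (sum_le_sum fun j hj => sum_le_sum (hcost j hj)).trans_eq ?_
  simp only [competitorsOperatingCost, competitorsSwitchingCost, sum_add_distrib, sum_const,
    card_range, nsmul_eq_mul, Nat.cast_ofNat, ← mul_sum, sum_comm (s := range T)]

lemma sum_cost_competitor_le (h : SteepCosts d ε β l) (hx : ∀ j, x 0 j = 0)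
    (hidle : ∀ t < T, lane d x t 1 = 0 → lane d x (t + 1) 1 ≠ 0) :
    ∑ j ∈ Icc 1 d, ∑ i ∈ range 2, cost T d β l (competitor T d x (j + i) j) ≤
      (1 + 2 * ε) * cost T d β l x + 2 * ∑ j ∈ Icc 1 d, β j := by
  have hε := h.eps_nonneg
  refine (sum_cost_competitor_le_sum_range h.β_nonneg).trans (add_le_add_left ?_ _)
  calc ∑ t ∈ range T, (competitorsOperatingCost d l (lane d x t 1) +
          competitorsSwitchingCost d β (lane d x t 1) (lane d x (t + 1) 1))
      ≤ ∑ t ∈ range T, (1 + 2 * ε) *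
          (operatingCost d l (x t) + switchingCost d β (x t) (x (t + 1))) := by
        refine sum_le_sum fun t ht => ?_
        have hop := competitorsOperatingCost_le h (hidle t (mem_range.1 ht))
        have hsw := competitorsSwitchingCost_le (x := x) (t := t) h
        have := mul_nonneg hε (operatingCost_nonneg h.l_nonneg (x t))
        linarith
    _ ≤ (1 + 2 * ε) * cost T d β l x := by
        rw [← mul_sum, cost_eq_sum_range, sum_add_distrib, sum_add_distrib]
        gcongr ?_ * (?_ + _)
        exact sum_operatingCost_le h.l_nonneg hx

end Charging

section Adversary

variable {T d : ℕ} {c ε : ℝ} {β l : ℕ → ℝ} {lam : ℕ → ℕ} {x : ℕ → ℕ → ℕ}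

/-- The job volumes `lam` send a job exactly when `x` had no active server one slot earlier. -/
def Adversarial (T d : ℕ) (lam : ℕ → ℕ) (x : ℕ → ℕ → ℕ) : Prop :=
  ∀ t < T, lam (t + 1) = if lane d x t 1 = 0 then 1 else 0

/-- The sequence each of whose terms is computed by `f` from the list of all earlier terms. -/
def historySeq {α : Type*} (f : List α → α) (t : ℕ) : α :=
  f ((List.range t).attach.map fun ⟨i, _⟩ => historySeq f i)
termination_by t
decreasing_by exact List.mem_range.1 ‹_›

lemma historySeq_eq {α : Type*} (f : List α → α) (t : ℕ) :
    historySeq f t = f ((List.range t).map (historySeq f)) := by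
  rw [historySeq, List.attach_map_val (f := historySeq f)]

lemma exists_adversarial (d : ℕ) (A : List ℕ → ℕ → ℕ) :
    ∃ lam : ℕ → ℕ, (∀ t, lam t ≤ 1) ∧ ∀ T, Adversarial T d lam (onlineSched A T d lam) := by
  let respond (h : List ℕ) : ℕ := if h = [] ∨ ∑ j ∈ Icc 1 d, A h j = 0 then 1 else 0
  refine ⟨fun t => historySeq respond (t - 1), fun t => ?_, fun T t ht => ?_⟩
  · dsimp only
    rw [historySeq_eq]
    dsimp only [respond]
    split_ifs <;> omega
  · dsimp only
    rw [Nat.add_sub_cancel, historySeq_eq]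
    refine if_congr ?_ rfl rfl
    rw [lane_one_eq_zero_iff]
    rcases Nat.eq_zero_or_pos t with rfl | hpos
    · simp [onlineSched]
    · have hne : (List.range t).map (historySeq respond) ≠ [] := by simp [hpos.ne']
      rw [or_iff_right hne, sum_eq_zero_iff]
      refine forall₂_congr fun j hj => ?_
      have hactive : 1 ≤ t ∧ t ≤ T ∧ 1 ≤ j ∧ j ≤ d := ⟨hpos, ht.le, mem_Icc.1 hj⟩
      simp only [onlineSched, if_pos hactive, Nat.add_sub_cancel]

lemma Adversarial.lane_succ_ne_zero {m : ℕ → ℕ} (hadv : Adversarial T d lam x)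
    (hfeas : Feasible T d m lam x) : ∀ t < T, lane d x t 1 = 0 → lane d x (t + 1) 1 ≠ 0 := by
  intro t ht hidle hnext
  have hdemand := (hfeas.2.2 (t + 1) (mem_Icc.2 ⟨by omega, ht⟩)).1
  rw [hadv t ht, if_pos hidle, sum_eq_zero (lane_one_eq_zero_iff.1 hnext)] at hdemand
  omega

lemma Adversarial.feasible_competitor {k j : ℕ} (hadv : Adversarial T d lam x)
    (hj : j ∈ Icc 1 d) (hk : 0 < k) :
    Feasible T d (fun _ => 1) lam (competitor T d x k j) := by
  refine feasible_singleTypeSchedule hj (fun t ht => ?_) fun t => belowThreshold_le_one _ _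
  rw [hadv t ht, belowThreshold]
  split_ifs <;> omega

lemma mul_le_sum_cost_competitor (hd : 1 ≤ d) (h : SteepCosts d ε β l) :
    T * l d ≤ ∑ j ∈ Icc 1 d, ∑ i ∈ range 2, cost T d β l (competitor T d x (j + i) j) := by
  have hnonneg (k j : ℕ) : 0 ≤ cost T d β l (competitor T d x k j) :=
    cost_nonneg h.β_nonneg h.l_nonneg _
  have hd_mem : d ∈ Icc 1 d := mem_Icc.2 ⟨hd, le_rfl⟩
  have halways (t : ℕ) : belowThreshold (d + 1) (lane d x t 1) = 1 :=
    if_pos (Nat.lt_succ_of_le lane_one_le)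
  calc T * l d = l d * ∑ t ∈ range T, (belowThreshold (d + 1) (lane d x t 1) : ℝ) := by
        simp [halways, mul_comm]
    _ ≤ cost T d β l (competitor T d x (d + 1) d) :=
        le_cost_singleTypeSchedule hd_mem (h.β_nonneg d hd_mem)
    _ ≤ ∑ i ∈ range 2, cost T d β l (competitor T d x (d + i) d) :=
        single_le_sum (f := fun i => cost T d β l (competitor T d x (d + i) d))
          (fun i _ => hnonneg _ _) (mem_range.2 one_lt_two)
    _ ≤ _ := single_le_sum
        (f := fun j => ∑ i ∈ range 2, cost T d β l (competitor T d x (j + i) j))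
        (fun j _ => sum_nonneg fun i _ => hnonneg _ _) hd_mem

lemma Adversarial.mul_le_of_competitive (hd : 1 ≤ d) (h : SteepCosts d ε β l)
    (hadv : Adversarial T d lam x) (hfeas : Feasible T d (fun _ => 1) lam x)
    (hcomp : ∀ x', Feasible T d (fun _ => 1) lam x' → cost T d β l x ≤ c * cost T d β l x')
    (hc : (1 + 2 * ε) * c ≤ 2 * d) :
    (2 * d - (1 + 2 * ε) * c) * (T * l d) ≤ 4 * d * ∑ j ∈ Icc 1 d, β j := by
  set S := ∑ j ∈ Icc 1 d, ∑ i ∈ range 2, cost T d β l (competitor T d x (j + i) j)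
  have hε := h.eps_nonneg
  have hlower : T * l d ≤ S := mul_le_sum_cost_competitor hd h
  have hupper : S ≤ (1 + 2 * ε) * cost T d β l x + 2 * ∑ j ∈ Icc 1 d, β j :=
    sum_cost_competitor_le h hfeas.1 (hadv.lane_succ_ne_zero hfeas)
  have hratio : 2 * d * cost T d β l x ≤ c * S :=
    calc 2 * d * cost T d β l x
        = ∑ _j ∈ Icc 1 d, ∑ _i ∈ range 2, cost T d β l x := by simp; ring
      _ ≤ ∑ j ∈ Icc 1 d, ∑ i ∈ range 2, c * cost T d β l (competitor T d x (j + i) j) :=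
          sum_le_sum fun j hj => sum_le_sum fun i _ => hcomp _ <|
            hadv.feasible_competitor hj (by rw [mem_Icc] at hj; omega)
      _ = c * S := by simp only [S, mul_sum]
  calc (2 * d - (1 + 2 * ε) * c) * (T * l d) ≤ (2 * d - (1 + 2 * ε) * c) * S :=
        mul_le_mul_of_nonneg_left hlower (by linarith)
    _ = 2 * d * S - (1 + 2 * ε) * (c * S) := by ring
    _ ≤ 2 * d * ((1 + 2 * ε) * cost T d β l x + 2 * ∑ j ∈ Icc 1 d, β j) -
        (1 + 2 * ε) * (2 * d * cost T d β l x) := by gcongr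
    _ = 4 * d * ∑ j ∈ Icc 1 d, β j := by ring

end Adversary

/-- No deterministic online algorithm for data-center right-sizing with
`d` heterogeneous server types and time- and load-independent operating costs achieves
a competitive ratio `c < 2d`: there is no online algorithm (possibly depending on the
instance parameters `m`, `β`, `l`) that, on every instance with sorted efficient costs,
produces a feasible schedule of cost at most `c` times the cost of every feasible
schedule. -/
theorem no_better_than_2d (d : ℕ) (hd : 1 ≤ d) (c : ℝ) (hc : c < 2 * d) :
    ¬ ∃ A : (ℕ → ℕ) → (ℕ → ℝ) → (ℕ → ℝ) → List ℕ → ℕ → ℕ,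
      ∀ (m : ℕ → ℕ) (β l : ℕ → ℝ),
        (∀ j j', 1 ≤ j → j < j' → j' ≤ d → l j' < l j) →
        (∀ j, 1 ≤ j → j ≤ d → 0 < l j) →
        (∀ j j', 1 ≤ j → j < j' → j' ≤ d → β j < β j') →
        (∀ j, 1 ≤ j → j ≤ d → 0 < β j) →
        ∀ (T : ℕ) (lam : ℕ → ℕ),
          (∀ t ∈ Finset.Icc 1 T, lam t ≤ ∑ j ∈ Finset.Icc 1 d, m j) →
          Feasible T d m lam (onlineSched (A m β l) T d lam) ∧
          ∀ x', Feasible T d m lam x' →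
            cost T d β l (onlineSched (A m β l) T d lam) ≤ c * cost T d β l x' := by
  rintro ⟨A, hA⟩
  obtain ⟨N, hN, hNc⟩ := exists_one_lt_mul_lt hc
  have hN0 : 0 < N := one_pos.trans hN
  set β : ℕ → ℝ := fun j => N ^ j
  set l : ℕ → ℝ := fun j => (N ^ j)⁻¹
  have hβ_mono : StrictMono β := pow_right_strictMono₀ hN
  have hl_anti : StrictAnti l := fun i j hij => inv_strictAnti₀ (pow_pos hN0 i) (hβ_mono hij)
  have hβ_pos (j : ℕ) : 0 < β j := pow_pos hN0 j
  have hl_pos (j : ℕ) : 0 < l j := inv_pos.2 (hβ_pos j)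
  obtain ⟨lam, hlam, hadv⟩ := exists_adversarial d (A (fun _ => 1) β l)
  obtain ⟨T, hT⟩ := exists_nat_gt
    (4 * d * (∑ j ∈ Icc 1 d, β j) / ((2 * d - (1 + 2 * (2 / (N - 1))) * c) * l d))
  obtain ⟨hfeas, hcomp⟩ := hA (fun _ => 1) β l (fun _ _ _ hlt _ => hl_anti hlt)
    (fun j _ _ => hl_pos j) (fun _ _ _ hlt _ => hβ_mono hlt) (fun j _ _ => hβ_pos j) T lam
    fun t _ => (hlam t).trans (by simpa using hd)
  have hbound := (hadv T).mul_le_of_competitive hd (steepCosts_pow hN d) hfeas hcomp hNc.le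
  rw [div_lt_iff₀ (mul_pos (sub_pos.2 hNc) (hl_pos d))] at hT
  linarith
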